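/- Let k ≥ 1 and let (U_j)_{j=1}^{k} be cofinite ultrafilters on FIN_j such that for all 0 < j ≤ k and every nondecreasing surjection f : {0,…,k} → {0,…,j}, U_k + U_j = U_j + U_k = U_k and f(U_k) = U_j. Then for any sets A_j ∈ U_j (j = 1,…,k) there exists an infinite block sequence (b_n) in FIN_k such that TS_j(b_n) ⊆ A_j for every j = 1,2,…,k. -/

import Mathlib

/-!
The hypotheses in degree `k` imply `U_i + U_l = U_{max i l}` for all `i, l ≤ k` (`extU_add`):
apply the truncation `x ↦ min x m` to `U_k + U_i = U_i + U_k = U_k`, for `i ≤ m`. With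
`U_0` taken to be the principal ultrafilter at `0`, this and `f(U_k) = U_j` (`extU_tetris`) hold
in degree `0` as well.

Call `(a, j)` extendable if for all `i ≤ k` and `U_i`-almost all `c`, `a + c ∈ A_{max j i}`; for
`i = 0` this says `a ∈ A_j`. If `(a, j)` is extendable and `f` is a nondecreasing surjection onto
`{0,…,i}`, then for `U_k`-almost all `b` the pair `(a + f ∘ b, max j i)` is again extendable, since
`U_{max i l} = U_i + U_l = f(U_k) + U_l` for each `l ≤ k`. Only finitely many pairs and tetris
functions matter at each stage, so blocks `b_0, b_1, …` can be chosen one at a time such that all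
tetris combinations of the blocks so far remain extendable.
-/

open Filter

/-- `FIN k`: finitely supported functions `ℕ → {0,…,k}` attaining the maximum value `k`. -/
def FIN (k : ℕ) : Set (ℕ → ℕ) :=
  {b | (∀ n, b n ≤ k) ∧ {n | b n ≠ 0}.Finite ∧ ∃ n, b n = k}

/-- `Supp b < Supp b'`. -/
def SuppLT (b b' : ℕ → ℕ) : Prop :=
  ∀ m, b m ≠ 0 → ∀ m', b' m' ≠ 0 → m < m'

/-- `f` is (the extension to `ℕ` of) a nondecreasing surjection `{0,…,k} → {0,…,j}`. -/
def IsTetrisFn (k j : ℕ) (f : ℕ → ℕ) : Prop :=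
  (∀ i i', i' ≤ i → i ≤ k → f i' ≤ f i) ∧ (∀ i, i ≤ k → f i ≤ j) ∧
    ∀ m, m ≤ j → ∃ i, i ≤ k ∧ f i = m

/-- An infinite block sequence in `FIN k`. -/
def IsBlockSeq (k : ℕ) (b : ℕ → ℕ → ℕ) : Prop :=
  (∀ n, b n ∈ FIN k) ∧ ∀ n, SuppLT (b n) (b (n + 1))

/-- The tetris subspace `TS_j(b_n)` of `FIN j` generated by a block sequence in `FIN k`. -/
def TS (k j : ℕ) (b : ℕ → ℕ → ℕ) : Set (ℕ → ℕ) :=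
  {a | a ∈ FIN j ∧ ∃ (n : ℕ) (js : ℕ → ℕ) (fs : ℕ → ℕ → ℕ),
    (∀ i, i ≤ n → js i ≤ j ∧ IsTetrisFn k (js i) (fs i)) ∧
    (∃ i, i ≤ n ∧ js i = j) ∧
    a = ∑ i ∈ Finset.range (n + 1), (fs i) ∘ (b i)}

/-- An ultrafilter is cofinite if for every `n` the set of `b` with `b n = 0` belongs
to it. -/
def IsCofinite (U : Ultrafilter (ℕ → ℕ)) : Prop := ∀ n, {b : ℕ → ℕ | b n = 0} ∈ U

/-- `A ∈ U + V`. -/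
def memSum (U V : Ultrafilter (ℕ → ℕ)) (A : Set (ℕ → ℕ)) : Prop :=
  ∀ᶠ b in (U : Filter (ℕ → ℕ)), ∀ᶠ b' in (V : Filter (ℕ → ℕ)),
    SuppLT b b' ∧ b + b' ∈ A

/-- The generalized tetris operation `b ↦ f ∘ b`. -/
def tetrisMap (f : ℕ → ℕ) : (ℕ → ℕ) → ℕ → ℕ := fun b => f ∘ b

/-- Every finitely supported function precedes almost all members of a cofinite ultrafilter. -/
lemma eventually_suppLT {U : Ultrafilter (ℕ → ℕ)} (hU : IsCofinite U) (b : ℕ → ℕ)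
    (hb : {n | b n ≠ 0}.Finite) : ∀ᶠ c in (U : Filter (ℕ → ℕ)), SuppLT b c := by
  obtain ⟨N, hN⟩ := hb.bddAbove
  have h : ∀ᶠ c in (U : Filter (ℕ → ℕ)), ∀ n ∈ Set.Iic N, c n = 0 :=
    (Filter.eventually_all_finite (Set.finite_Iic N)).2 fun n _ => hU n
  filter_upwards [h] with c hc m hm m' hm'
  by_contra hlt
  exact hm' (hc m' ((not_lt.1 hlt).trans (hN hm)))

lemma IsTetrisFn.map_zero {k j : ℕ} {f : ℕ → ℕ} (hf : IsTetrisFn k j f) : f 0 = 0 := by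
  obtain ⟨i, hi, h⟩ := hf.2.2 0 (Nat.zero_le _)
  exact Nat.le_zero.1 (h ▸ hf.1 i 0 (Nat.zero_le _) hi)

lemma isTetrisFn_min {k m : ℕ} (hm : m ≤ k) : IsTetrisFn k m (fun x => min x m) :=
  ⟨fun _ _ h _ => min_le_min_right _ h, fun _ _ => min_le_right _ _,
    fun i hi => ⟨i, hi.trans hm, min_eq_left hi⟩⟩

lemma comp_add_of_suppLT {f b c : ℕ → ℕ} (hf : f 0 = 0) (h : SuppLT b c) :
    f ∘ (b + c) = f ∘ b + f ∘ c := by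
  funext x
  by_cases hb : b x = 0
  · simp [hb, hf]
  · have hc : c x = 0 := by
      by_contra hc
      exact lt_irrefl _ (h x hb x hc)
    simp [hc, hf]

/-- The family `U` extended by the principal ultrafilter at `0` in degree `0`; this is the unit
for addition, so that sums with some trivial summands need no separate treatment. -/
def extU (U : ℕ → Ultrafilter (ℕ → ℕ)) (j : ℕ) : Ultrafilter (ℕ → ℕ) :=
  if j = 0 then pure 0 else U j

/-- `(a, j)` is extendable if for each `i ≤ k`, almost every `c` in degree `i` keeps `a + c`
inside the target set of degree `max j i`. -/
def Extendable (k : ℕ) (V : ℕ → Ultrafilter (ℕ → ℕ)) (A : ℕ → Set (ℕ → ℕ))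
    (p : (ℕ → ℕ) × ℕ) : Prop :=
  p.2 ≤ k ∧ ∀ i ≤ k, ∀ᶠ c in (V i : Filter (ℕ → ℕ)), p.1 + c ∈ A (max p.2 i)

/-- Extends a function on `{0,…,k}` by zero, so that the relevant tetris functions are
parametrized by a finite type. -/
def extendFn (k : ℕ) (F : Fin (k + 1) → Fin (k + 1)) (x : ℕ) : ℕ :=
  if h : x < k + 1 then F ⟨x, h⟩ else 0

/-- On `FIN k`, each tetris function agrees with one of the finitely many `extendFn k F`. -/
lemma IsTetrisFn.exists_extendFn {k j : ℕ} (hj : j ≤ k) {f : ℕ → ℕ} (hf : IsTetrisFn k j f) :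
    ∃ F, IsTetrisFn k j (extendFn k F) ∧ ∀ b ∈ FIN k, f ∘ b = extendFn k F ∘ b := by
  let F : Fin (k + 1) → Fin (k + 1) := fun x =>
    ⟨f x, Nat.lt_succ_of_le ((hf.2.1 x (Nat.le_of_lt_succ x.2)).trans hj)⟩
  have hF : ∀ x ≤ k, extendFn k F x = f x := fun x hx => by
    simp [extendFn, F, Nat.lt_succ_of_le hx]
  refine ⟨F, ⟨fun i i' h hi => ?_, fun i hi => ?_, fun m hm => ?_⟩, fun b hb => ?_⟩
  · rw [hF i hi, hF i' (h.trans hi)]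
    exact hf.1 i i' h hi
  · rw [hF i hi]
    exact hf.2.1 i hi
  · obtain ⟨i, hi, h⟩ := hf.2.2 m hm
    exact ⟨i, hi, (hF i hi).trans h⟩
  · funext x
    exact (hF _ (hb.1 x)).symm

/-- Absorption in all degrees, `U_m + U_i = U_i + U_m = U_m` for `i ≤ m`, comes from absorption
in degree `k` by applying the truncation `x ↦ min x m`, which maps `U_k` to `U_m` and
fixes `FIN i` pointwise. -/
lemma extU_add (k : ℕ) (U : ℕ → Ultrafilter (ℕ → ℕ))
    (hU : ∀ j, 1 ≤ j → j ≤ k → FIN j ∈ U j ∧ IsCofinite (U j))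
    (hsum : ∀ j, 0 < j → j ≤ k →
      (∀ A : Set (ℕ → ℕ), memSum (U k) (U j) A ↔ A ∈ U k) ∧
      (∀ A : Set (ℕ → ℕ), memSum (U j) (U k) A ↔ A ∈ U k))
    (hmap : ∀ j, 0 < j → j ≤ k →
      ∀ f : ℕ → ℕ, IsTetrisFn k j f → (U k).map (tetrisMap f) = U j)
    (i l : ℕ) (hi : i ≤ k) (hl : l ≤ k) (B : Set (ℕ → ℕ)) (hB : B ∈ extU U (max i l)) :
    ∀ᶠ d in (extU U i : Filter (ℕ → ℕ)), ∀ᶠ c in (extU U l : Filter (ℕ → ℕ)), d + c ∈ B := by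
  rcases Nat.eq_zero_or_pos i with rfl | hi0
  · simpa [extU] using hB
  rcases Nat.eq_zero_or_pos l with rfl | hl0
  · have : B ∈ U i := by simpa [extU, hi0.ne'] using hB
    simpa [extU, hi0.ne'] using this
  simp only [extU, hi0.ne', hl0.ne', (lt_max_of_lt_left hi0 : 0 < max i l).ne', if_false] at hB ⊢
  have hfix : ∀ i m : ℕ, i ≤ m → ∀ c ∈ FIN i, (fun x => min x m) ∘ c = c := fun i m him c hc => by
    funext x
    exact min_eq_left ((hc.1 x).trans him)
  rcases le_total i l with hil | hil
  · rw [max_eq_right hil] at hB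
    have ht := isTetrisFn_min hl
    have hUk := hmap l hl0 hl _ ht
    rw [← hUk, Ultrafilter.mem_map] at hB
    have h := ((hsum i hi0 hi).2 _).2 hB
    filter_upwards [h, (hU i hi0 hi).1] with d hd hdi
    rw [← hUk, Ultrafilter.coe_map, Filter.eventually_map]
    filter_upwards [hd] with c hc
    have := hc.2
    simp only [Set.mem_preimage, tetrisMap] at this ⊢
    rwa [comp_add_of_suppLT ht.map_zero hc.1, hfix i l hil d hdi] at this
  · rw [max_eq_left hil] at hB
    have ht := isTetrisFn_min hi
    have hUk := hmap i hi0 hi _ ht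
    rw [← hUk, Ultrafilter.mem_map] at hB
    have h := ((hsum l hl0 hl).1 _).2 hB
    rw [← hUk, Ultrafilter.coe_map, Filter.eventually_map]
    filter_upwards [h] with d hd
    filter_upwards [hd, (hU l hl0 hl).1] with c hc hcl
    have := hc.2
    simp only [Set.mem_preimage, tetrisMap] at this ⊢
    rwa [comp_add_of_suppLT ht.map_zero hc.1, hfix l i hil c hcl] at this

lemma extU_tetris (k : ℕ) (U : ℕ → Ultrafilter (ℕ → ℕ))
    (hFIN : FIN k ∈ U k)
    (hmap : ∀ j, 0 < j → j ≤ k →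
      ∀ f : ℕ → ℕ, IsTetrisFn k j f → (U k).map (tetrisMap f) = U j)
    (j : ℕ) (hj : j ≤ k) (f : ℕ → ℕ) (hf : IsTetrisFn k j f) (p : (ℕ → ℕ) → Prop)
    (hp : ∀ᶠ d in (extU U j : Filter (ℕ → ℕ)), p d) :
    ∀ᶠ b in (U k : Filter (ℕ → ℕ)), p (f ∘ b) := by
  rcases Nat.eq_zero_or_pos j with rfl | hj0
  · have hp0 : p 0 := by simpa [extU] using hp
    filter_upwards [hFIN] with b hb
    have : f ∘ b = 0 := by
      funext x
      exact Nat.le_zero.1 (hf.2.1 _ (hb.1 x))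
    rwa [this]
  · simp only [extU, hj0.ne', if_false] at hp
    rw [← hmap j hj0 hj f hf, Ultrafilter.coe_map, Filter.eventually_map] at hp
    exact hp

/-- Given cofinite ultrafilters `U_1, …, U_k` with `U_k + U_j = U_j + U_k = U_k` and
`f(U_k) = U_j` for all `0 < j ≤ k` and nondecreasing surjections `f : {0,…,k} → {0,…,j}`,
and sets `A_j ∈ U_j`, there is an infinite block sequence `(b_n)` in `FIN k` with
`TS_j(b_n) ⊆ A_j` for every `j = 1,…,k`. -/
theorem block_sequence_from_coherent_ultrafilters (k : ℕ) (hk : 1 ≤ k)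
    (U : ℕ → Ultrafilter (ℕ → ℕ))
    (hU : ∀ j, 1 ≤ j → j ≤ k → FIN j ∈ U j ∧ IsCofinite (U j))
    (hsum : ∀ j, 0 < j → j ≤ k →
      (∀ A : Set (ℕ → ℕ), memSum (U k) (U j) A ↔ A ∈ U k) ∧
      (∀ A : Set (ℕ → ℕ), memSum (U j) (U k) A ↔ A ∈ U k))
    (hmap : ∀ j, 0 < j → j ≤ k →
      ∀ f : ℕ → ℕ, IsTetrisFn k j f → (U k).map (tetrisMap f) = U j)
    (A : ℕ → Set (ℕ → ℕ)) (hA : ∀ j, 1 ≤ j → j ≤ k → A j ∈ U j) :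
    ∃ b : ℕ → ℕ → ℕ, IsBlockSeq k b ∧ ∀ j, 1 ≤ j → j ≤ k → TS k j b ⊆ A j := by
  classical
  set V := extU U with hV
  let A' : ℕ → Set (ℕ → ℕ) := fun j => if j = 0 then {0} else A j
  have hFIN := (hU k hk le_rfl).1
  have hadd := extU_add k U hU hsum hmap
  have htet := extU_tetris k U hFIN hmap
  -- The initial pair `(0, 0)` is extendable: this is the hypothesis `A j ∈ U j`.
  have h0 : Extendable k V A' (0, 0) := by
    refine ⟨Nat.zero_le _, fun i hi => ?_⟩
    rcases Nat.eq_zero_or_pos i with rfl | hi0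
    · simp [hV, extU, A']
    · have := hA i hi0 hi
      simpa [hV, extU, A', hi0.ne'] using this
  have hone : ∀ p, Extendable k V A' p → ∀ i ≤ k, ∀ f, IsTetrisFn k i f →
      ∀ᶠ b in (U k : Filter (ℕ → ℕ)), Extendable k V A' (p.1 + f ∘ b, max p.2 i) := by
    rintro ⟨a, j⟩ ⟨hj, hp⟩ i hi f hf
    have h : ∀ᶠ d in (V i : Filter (ℕ → ℕ)), ∀ l ∈ Set.Iic k,
        ∀ᶠ c in (V l : Filter (ℕ → ℕ)), a + (d + c) ∈ A' (max j (max i l)) :=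
      (Filter.eventually_all_finite (Set.finite_Iic k)).2 fun l hl =>
        hadd i l hi hl _ (hp (max i l) (max_le hi hl))
    filter_upwards [htet i hi f hf _ h] with b hb
    refine ⟨max_le hj hi, fun l hl => ?_⟩
    simpa only [add_assoc, max_assoc] using hb l hl
  -- A state is a finite set of extendable pairs together with the last block chosen.
  let St := {s : Set ((ℕ → ℕ) × ℕ) × (ℕ → ℕ) //
    s.1.Finite ∧ (∀ p ∈ s.1, Extendable k V A' p) ∧ {n | s.2 n ≠ 0}.Finite}
  have hstep : ∀ s : St, ∃ t : St, t.1.2 ∈ FIN k ∧ SuppLT s.1.2 t.1.2 ∧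
      ∀ p ∈ s.1.1, ∀ i ≤ k, ∀ f, IsTetrisFn k i f →
        (p.1 + f ∘ t.1.2, max p.2 i) ∈ t.1.1 := by
    rintro ⟨⟨S, b₀⟩, hS, hext, hb₀⟩
    have h : ∀ᶠ b in (U k : Filter (ℕ → ℕ)), ∀ p ∈ S, ∀ i ∈ Set.Iic k,
        ∀ F : Fin (k + 1) → Fin (k + 1), IsTetrisFn k i (extendFn k F) →
          Extendable k V A' (p.1 + extendFn k F ∘ b, max p.2 i) := by
      refine (Filter.eventually_all_finite hS).2 fun p hp =>
        (Filter.eventually_all_finite (Set.finite_Iic k)).2 fun i hi =>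
          Filter.eventually_all.2 fun F => ?_
      by_cases hF : IsTetrisFn k i (extendFn k F)
      · filter_upwards [hone p (hext p hp) i hi _ hF] with b hb _ using hb
      · exact Filter.Eventually.of_forall fun b hF' => absurd hF' hF
    obtain ⟨b, hb, hbF, hlt⟩ := (h.and (Filter.Eventually.and hFIN
      (eventually_suppLT (hU k hk le_rfl).2 b₀ hb₀))).exists
    let g : (((ℕ → ℕ) × ℕ) × ℕ) × (Fin (k + 1) → Fin (k + 1)) → (ℕ → ℕ) × ℕ :=
      fun q => (q.1.1.1 + extendFn k q.2 ∘ b, max q.1.1.2 q.1.2)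
    let D : Set ((((ℕ → ℕ) × ℕ) × ℕ) × (Fin (k + 1) → Fin (k + 1))) :=
      (S ×ˢ Set.Iic k) ×ˢ Set.univ
    have hD : D.Finite := (hS.prod (Set.finite_Iic k)).prod Set.finite_univ
    refine ⟨⟨(g '' (D ∩ {q | IsTetrisFn k q.1.2 (extendFn k q.2)}), b),
      (hD.inter_of_left _).image g, ?_, hbF.2.1⟩, hbF, hlt, ?_⟩
    · rintro _ ⟨⟨⟨p, i⟩, F⟩, ⟨⟨⟨hp, hi⟩, _⟩, hF⟩, rfl⟩
      exact hb p hp i hi F hF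
    · intro p hp i hi f hf
      obtain ⟨F, hF, hfF⟩ := hf.exists_extendFn hi
      refine ⟨((p, i), F), ⟨⟨⟨hp, hi⟩, trivial⟩, hF⟩, ?_⟩
      simp only [g, hfF b hbF]
  choose next hnext using hstep
  let s₀ : St := ⟨({(0, 0)}, 0), Set.finite_singleton _, by simpa using h0, by simp⟩
  let s : ℕ → St := fun n => next^[n] s₀
  have hs : ∀ n, s (n + 1) = next (s n) := fun n => Function.iterate_succ_apply' next n s₀
  refine ⟨fun n => (s (n + 1)).1.2, ⟨fun n => ?_, fun n => ?_⟩, ?_⟩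
  · show (s (n + 1)).1.2 ∈ FIN k
    rw [hs]
    exact (hnext _).1
  · show SuppLT (s (n + 1)).1.2 (s (n + 1 + 1)).1.2
    rw [hs (n + 1)]
    exact (hnext _).2.1
  · rintro j hj1 hjk a ⟨-, n, js, fs, hjs, ⟨i₀, hi₀, hji⟩, rfl⟩
    have key : ∀ m ≤ n + 1, (∑ i ∈ Finset.range m, fs i ∘ (s (i + 1)).1.2,
        (Finset.range m).sup js) ∈ (s m).1.1 := by
      intro m
      induction m with
      | zero => intro _; simp [s, s₀]
      | succ m ih =>
        intro hm
        have hmn : m ≤ n := Nat.le_of_succ_le_succ hm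
        have := (hnext (s m)).2.2 _ (ih (by omega)) (js m) ((hjs m hmn).1.trans hjk) (fs m)
          (hjs m hmn).2
        rw [← hs] at this
        rw [Finset.sum_range_succ, Finset.range_add_one, Finset.sup_insert, sup_comm]
        exact this
    have hsup : (Finset.range (n + 1)).sup js = j := by
      refine le_antisymm (Finset.sup_le fun i hi => (hjs i ?_).1) ?_
      · exact Nat.le_of_lt_succ (Finset.mem_range.1 hi)
      · rw [← hji]
        exact Finset.le_sup (Finset.mem_range.2 (Nat.lt_succ_of_le hi₀))
    have hfin := ((s (n + 1)).2.2.1 _ (key (n + 1) le_rfl)).2 0 (Nat.zero_le _)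
    simp only [hsup] at hfin
    have hj0 : j ≠ 0 := by omega
    simpa [hV, extU, A', hj0] using hfin
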